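/- arXiv:1802.09930 — 4 statements merged into one kernel-verified Lean document; each statement's English description precedes it below -/
import Mathlib

section
/- Let V be a finite-dimensional real inner product space and let Σ₁, Σ₂ ⊆ V be linear subspaces with Σ₁ ∩ Σ₂ = {0}. Let G : V × V → ℂ be a measurable function of polynomial growth, i.e. there exist C > 0 and M ∈ ℕ with |G(u,w)| ≤ C·(1 + ‖u‖ + ‖w‖)^M for all u, w. Then the function (u,w) ↦ G(u,w)·exp(−(π/2)·‖u − w‖²) is integrable on Σ₁ × Σ₂ with respect to the product of the Lebesgue measures that the induced inner products determine on Σ₁ and Σ₂. -/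
open scoped Real
open MeasureTheory

/-!
Two subspaces meeting only at the origin make a positive angle: `(u, w) ↦ u - w` is injective on
the finite-dimensional space `S₁ × S₂`, so `c * ‖(u, w)‖ ≤ ‖u - w‖` for some `c > 0`. The kernel is
therefore dominated by a Gaussian in `‖(u, w)‖`, which absorbs every polynomial factor as well as
the power of `1 + ‖(u, w)‖` needed for integrability.
-/

lemma one_add_pow_mul_exp_neg_mul_sq_le {b t : ℝ} (hb : 0 < b) (ht : -1 ≤ t) (k : ℕ) :
    (1 + t) ^ k * Real.exp (-b * t ^ 2) ≤ k.factorial * Real.exp (1 + 1 / (4 * b)) := by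
  have pow_le : (1 + t) ^ k ≤ k.factorial * Real.exp (1 + t) := by
    rw [← div_le_iff₀' (by positivity)]
    exact Real.pow_div_factorial_le_exp (1 + t) (by linarith) k
  have completed_square : t - b * t ^ 2 ≤ 1 / (4 * b) := by
    rw [le_div_iff₀ (by positivity)]
    linarith [sq_nonneg (2 * b * t - 1)]
  calc (1 + t) ^ k * Real.exp (-b * t ^ 2)
      ≤ k.factorial * Real.exp (1 + t) * Real.exp (-b * t ^ 2) := by gcongr
    _ = k.factorial * Real.exp (1 + (t - b * t ^ 2)) := by
        rw [mul_assoc, ← Real.exp_add]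
        ring_nf
    _ ≤ k.factorial * Real.exp (1 + 1 / (4 * b)) := by gcongr

section Gaussian

variable {E : Type*} [NormedAddCommGroup E] [MeasurableSpace E]
  {μ : Measure E} [μ.HasTemperateGrowth]

lemma integrable_one_add_norm_pow_mul_exp_neg_mul_sq_norm [OpensMeasurableSpace E]
    {b : ℝ} (hb : 0 < b) (k : ℕ) :
    Integrable (fun x : E ↦ (1 + ‖x‖) ^ k * Real.exp (-b * ‖x‖ ^ 2)) μ := by
  set N : ℕ := μ.integrablePower
  set A : ℝ := (k + N).factorial * Real.exp (1 + 1 / (4 * b))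
  refine (μ.integrable_pow_neg_integrablePower.const_mul A).mono' (by fun_prop) (ae_of_all _ ?_)
  intro x
  rw [Real.norm_of_nonneg (by positivity), Real.rpow_neg (by positivity), Real.rpow_natCast,
    ← div_eq_mul_inv, le_div_iff₀ (by positivity)]
  calc (1 + ‖x‖) ^ k * Real.exp (-b * ‖x‖ ^ 2) * (1 + ‖x‖) ^ N
      = (1 + ‖x‖) ^ (k + N) * Real.exp (-b * ‖x‖ ^ 2) := by ring
    _ ≤ A := one_add_pow_mul_exp_neg_mul_sq_le hb (by linarith [norm_nonneg x]) _

lemma norm_cexp_neg_mul_ofReal (b : ℂ) (r : ℝ) :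
    ‖Complex.exp (-b * (r : ℂ))‖ = Real.exp (-b.re * r) := by
  rw [Complex.norm_exp, Complex.re_mul_ofReal, Complex.neg_re]

lemma integrable_cexp_neg_mul_sq_norm_smul_of_mul_norm_le [OpensMeasurableSpace E]
    {V F : Type*} [SeminormedAddCommGroup V] [NormedAddCommGroup F] [NormedSpace ℂ F]
    {T : E → V} (hT : AEStronglyMeasurable T μ) {c : ℝ} (hc : 0 < c)
    (hcT : ∀ x, c * ‖x‖ ≤ ‖T x‖) {g : E → F} (hg : AEStronglyMeasurable g μ) {C : ℝ} {k : ℕ}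
    (hgC : ∀ x, ‖g x‖ ≤ C * (1 + ‖x‖) ^ k) {b : ℂ} (hb : 0 < b.re) :
    Integrable (fun x ↦ Complex.exp (-b * ((‖T x‖ ^ 2 : ℝ) : ℂ)) • g x) μ := by
  have gaussian_integrable :=
    integrable_one_add_norm_pow_mul_exp_neg_mul_sq_norm (μ := μ) (b := b.re * c ^ 2)
      (by positivity) k
  refine (gaussian_integrable.const_mul C).mono' ?_ (ae_of_all _ fun x ↦ ?_)
  · have hT_norm : AEMeasurable (fun x ↦ ‖T x‖) μ := hT.norm.aemeasurable
    exact AEStronglyMeasurable.smul (AEMeasurable.aestronglyMeasurable (by fun_prop)) hg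
  have exponent_le : -b.re * ‖T x‖ ^ 2 ≤ -(b.re * c ^ 2) * ‖x‖ ^ 2 :=
    calc -b.re * ‖T x‖ ^ 2 ≤ -b.re * (c * ‖x‖) ^ 2 :=
          mul_le_mul_of_nonpos_left (by gcongr; exact hcT x) (by linarith)
      _ = -(b.re * c ^ 2) * ‖x‖ ^ 2 := by ring
  calc ‖Complex.exp (-b * ((‖T x‖ ^ 2 : ℝ) : ℂ)) • g x‖
      = ‖g x‖ * Real.exp (-b.re * ‖T x‖ ^ 2) := by
        rw [norm_smul, norm_cexp_neg_mul_ofReal, mul_comm]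
    _ ≤ C * (1 + ‖x‖) ^ k * Real.exp (-(b.re * c ^ 2) * ‖x‖ ^ 2) :=
        mul_le_mul (hgC x) (Real.exp_le_exp.mpr exponent_le) (Real.exp_nonneg _)
          ((norm_nonneg _).trans (hgC x))
    _ = C * ((1 + ‖x‖) ^ k * Real.exp (-(b.re * c ^ 2) * ‖x‖ ^ 2)) := mul_assoc _ _ _

end Gaussian

lemma exists_mul_norm_le_norm_sub_of_disjoint {𝕜 V : Type*} [NontriviallyNormedField 𝕜]
    [CompleteSpace 𝕜] [NormedAddCommGroup V] [NormedSpace 𝕜 V] {S₁ S₂ : Submodule 𝕜 V}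
    [FiniteDimensional 𝕜 S₁] [FiniteDimensional 𝕜 S₂] (h : Disjoint S₁ S₂) :
    ∃ c > 0, ∀ p : S₁ × S₂, c * ‖p‖ ≤ ‖(p.1 : V) - p.2‖ := by
  let difference : S₁ × S₂ →ₗ[𝕜] V := S₁.subtype.coprod (-S₂.subtype)
  have ker_difference : LinearMap.ker difference = ⊥ := by
    rw [LinearMap.ker_coprod_of_disjoint_range _ _ (by simpa [LinearMap.range_neg] using h)]
    simp [LinearMap.ker_neg]
  obtain ⟨K, -, hK⟩ := difference.exists_antilipschitzWith ker_difference
  simpa [difference, sub_eq_add_neg] using antilipschitzWith_iff_exists_mul_le_norm.mp ⟨K, hK⟩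

theorem stmt_4_general {V F : Type*} [NormedAddCommGroup V] [NormedSpace ℝ V]
    [NormedAddCommGroup F] [NormedSpace ℂ F] {S₁ S₂ : Submodule ℝ V}
    [FiniteDimensional ℝ S₁] [FiniteDimensional ℝ S₂] (h : Disjoint S₁ S₂)
    [MeasurableSpace S₁] [OpensMeasurableSpace S₁] [MeasurableSpace S₂] [OpensMeasurableSpace S₂]
    {μ : Measure (S₁ × S₂)} [μ.HasTemperateGrowth]
    {G : S₁ × S₂ → F} (hG : AEStronglyMeasurable G μ) {C : ℝ} {M : ℕ}
    (hbound : ∀ u w, ‖G (u, w)‖ ≤ C * (1 + ‖u‖ + ‖w‖) ^ M) {b : ℂ} (hb : 0 < b.re) :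
    Integrable (fun p : S₁ × S₂ ↦
      Complex.exp (-b * ((‖(p.1 : V) - (p.2 : V)‖ ^ 2 : ℝ) : ℂ)) • G p) μ := by
  obtain ⟨c, hc, hcT⟩ := exists_mul_norm_le_norm_sub_of_disjoint h
  have hC : 0 ≤ C := by simpa using (norm_nonneg _).trans (hbound 0 0)
  have hG_norm (p : S₁ × S₂) : ‖G p‖ ≤ C * 2 ^ M * (1 + ‖p‖) ^ M :=
    calc ‖G p‖ ≤ C * (1 + ‖p.1‖ + ‖p.2‖) ^ M := hbound p.1 p.2
      _ ≤ C * (2 * (1 + ‖p‖)) ^ M := by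
          gcongr
          linarith [norm_fst_le p, norm_snd_le p]
      _ = C * 2 ^ M * (1 + ‖p‖) ^ M := by rw [mul_pow, mul_assoc]
  have difference_continuous : Continuous fun p : S₁ × S₂ ↦ (p.1 : V) - (p.2 : V) := by fun_prop
  exact integrable_cexp_neg_mul_sq_norm_smul_of_mul_norm_le
    difference_continuous.aestronglyMeasurable hc hcT hG hG_norm hb

/-- If `Σ₁ ∩ Σ₂ = {0}` and `G` is measurable of polynomial growth, then
`(u,w) ↦ G(u,w) exp(-(π/2)‖u-w‖²)` is integrable on `Σ₁ × Σ₂` for the Lebesgue measures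
induced by the inner products. -/
theorem stmt_4 {V : Type*} [NormedAddCommGroup V] [InnerProductSpace ℝ V]
    [FiniteDimensional ℝ V] [MeasurableSpace V] [BorelSpace V]
    (S₁ S₂ : Submodule ℝ V) (h : S₁ ⊓ S₂ = ⊥)
    [MeasurableSpace S₁] [BorelSpace S₁] [MeasurableSpace S₂] [BorelSpace S₂]
    (G : V × V → ℂ) (hG : Measurable G)
    (C : ℝ) (hCpos : 0 < C) (M : ℕ)
    (hbound : ∀ u w : V, ‖G (u, w)‖ ≤ C * (1 + ‖u‖ + ‖w‖) ^ M) :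
    Integrable (fun p : S₁ × S₂ =>
      G ((p.1 : V), (p.2 : V)) *
        Complex.exp (-((π : ℂ) / 2) * ((‖(p.1 : V) - (p.2 : V)‖ ^ 2 : ℝ) : ℂ))) := by
  have : (volume : Measure (S₁ × S₂)).IsAddHaarMeasure := Measure.prod.instIsAddHaarMeasure _ _
  have inclusion_measurable : Measurable fun p : S₁ × S₂ ↦ ((p.1 : V), (p.2 : V)) :=
    Continuous.measurable (by fun_prop)
  simpa only [smul_eq_mul, mul_comm, Function.comp_apply] using stmt_4_general (disjoint_iff.mpr h)
    (hG.comp inclusion_measurable).aestronglyMeasurable (fun u w ↦ hbound u w)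
    (show 0 < ((π : ℂ) / 2).re by simp [Real.pi_pos])
end

section
/- Equip ℝ^{2n} with the standard symplectic form Ω(Z,Z') = Σ_{j=1}^n (u_j v'_j − v_j u'_j) for Z=(u,v), Z'=(u',v'), the standard inner product ⟨·,·⟩, and the standard basis e₁,…,e_n, f₁,…,f_n with Ω(e_i,f_j)=δ_{ij}. Let 1 ≤ d ≤ n and let ν₁,…,ν_d ∈ ℝ^{2n} be orthonormal vectors with Ω(ν_j,ν_k) = 0 for all j,k, such that span{ν₁,…,ν_d} ∩ span{e₁,…,e_n} = {0}. Define the n×d matrices A and B by A_{ij} = Ω(e_i,ν_j) and B_{ij} = ⟨e_i,ν_j⟩. Then the double integral I = ∫_{ℝ^d} ∫_{ℝ^n} exp( −(π/2)·‖Σ_{i=1}^n u_i e_i − Σ_{j=1}^d t_j ν_j‖² − π√−1·Ω(Σ_{i=1}^n u_i e_i, Σ_{j=1}^d t_j ν_j) ) du dt converges absolutely and satisfies I² · det(AᵀA + √−1·BᵀA) = 2^n. -/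
open scoped Real
open MeasureTheory

/-- Points of `ℝ^{2n}` written as pairs `Z = (u, v)`. -/
abbrev RR2 (n : ℕ) := (Fin n → ℝ) × (Fin n → ℝ)

/-- The standard symplectic form `Ω(Z,Z') = Σ_j (u_j v'_j - v_j u'_j)` on `ℝ^{2n}`. -/
def stdSymp {n : ℕ} (Z Z' : RR2 n) : ℝ := ∑ j, (Z.1 j * Z'.2 j - Z.2 j * Z'.1 j)

/-- The standard inner product on `ℝ^{2n}`. -/
def stdInner {n : ℕ} (Z Z' : RR2 n) : ℝ := ∑ j, Z.1 j * Z'.1 j + ∑ j, Z.2 j * Z'.2 j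

/-- The standard basis vectors `e_i` (the `u`-directions). -/
def eVec {n : ℕ} (i : Fin n) : RR2 n := (Pi.single i 1, 0)

/-- The standard basis vectors `f_i` (the `v`-directions). -/
def fVec {n : ℕ} (i : Fin n) : RR2 n := (0, Pi.single i 1)

/-- The model Bergman kernel integrand
`exp(-(π/2)‖Σᵢ uᵢ eᵢ - Σⱼ tⱼ νⱼ‖² - π √-1 Ω(Σᵢ uᵢ eᵢ, Σⱼ tⱼ νⱼ))`,
as a function of `(t, u) ∈ ℝ^d × ℝ^n`. -/
noncomputable def modelKernel {n d : ℕ} (ν : Fin d → RR2 n)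
    (t : Fin d → ℝ) (u : Fin n → ℝ) : ℂ :=
  Complex.exp
    (-((π : ℂ) / 2) *
        ((stdInner ((∑ i, u i • eVec i) - ∑ j, t j • ν j)
            ((∑ i, u i • eVec i) - ∑ j, t j • ν j) : ℝ) : ℂ)
      - (π : ℂ) * Complex.I *
        ((stdSymp (∑ i, u i • eVec i) (∑ j, t j • ν j) : ℝ) : ℂ))

/-!
Write `νⱼ = (bⱼ, aⱼ)`, where `aⱼ`, `bⱼ` are the columns of `A`, `B`. In the coordinates `(t, u)` the
kernel is a single Gaussian `exp(-π xᵀMx)` on `ℝ^{d+n}` with the complex symmetric matrix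
`M = ½ [[AᵀA + BᵀB, (iA - B)ᵀ], [iA - B, 1]]`. The real part of `M` is `½ NᵀN` with
`N = [[A, 0], [-B, 1]]`, which is positive definite because transversality to the span of the `eᵢ`
makes `A` injective. Diagonalizing the real and imaginary parts of `M` simultaneously reduces the
integral to one-dimensional Gaussians, so `I² det M = 1`. Isotropy says that `BᵀA` is symmetric, and
then the Schur complement of the block `1` in `2M` is `2(AᵀA + iBᵀA)`, which gives
`2ⁿ det M = det(AᵀA + iBᵀA)`.
-/

open Matrix

section SimultaneousDiagonalization

variable {𝕜 ι : Type*} [RCLike 𝕜] [Fintype ι] [DecidableEq ι]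

open scoped ComplexOrder

open scoped MatrixOrder in
theorem exists_isUnit_eq_conjTranspose_mul_self {S : Matrix ι ι 𝕜} (hS : S.PosDef) :
    ∃ C : Matrix ι ι 𝕜, IsUnit C ∧ S = Cᴴ * C :=
  CStarAlgebra.isStrictlyPositive_iff_eq_star_mul_self.mp hS.isStrictlyPositive

theorem exists_simultaneous_diagonalization {S T : Matrix ι ι 𝕜}
    (hS : S.PosDef) (hT : T.IsHermitian) :
    ∃ (P : Matrix ι ι 𝕜) (l : ι → ℝ),
      Pᴴ * S * P = 1 ∧ Pᴴ * T * P = diagonal fun i => (l i : 𝕜) := by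
  obtain ⟨C, hC, rfl⟩ := exists_isUnit_eq_conjTranspose_mul_self hS
  have hCC : C * C⁻¹ = 1 := mul_nonsing_inv C ((isUnit_iff_isUnit_det C).mp hC)
  have hT' : ((C⁻¹)ᴴ * T * C⁻¹).IsHermitian := isHermitian_conjTranspose_mul_mul C⁻¹ hT
  set U : Matrix ι ι 𝕜 := ↑hT'.eigenvectorUnitary
  have hUU : Uᴴ * U = 1 := Unitary.coe_star_mul_self hT'.eigenvectorUnitary
  refine ⟨C⁻¹ * U, hT'.eigenvalues, ?_, ?_⟩
  · calc (C⁻¹ * U)ᴴ * (Cᴴ * C) * (C⁻¹ * U) = Uᴴ * (C * C⁻¹)ᴴ * (C * C⁻¹) * U := by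
          simp only [conjTranspose_mul, Matrix.mul_assoc]
      _ = 1 := by rw [hCC, conjTranspose_one, Matrix.mul_one, Matrix.mul_one, hUU]
  · calc (C⁻¹ * U)ᴴ * T * (C⁻¹ * U) = Uᴴ * ((C⁻¹)ᴴ * T * C⁻¹) * U := by
          simp only [conjTranspose_mul, Matrix.mul_assoc]
      _ = diagonal fun i => (hT'.eigenvalues i : 𝕜) := by
          simpa only [Unitary.conjStarAlgAut_star_apply, star_eq_conjTranspose,
            Function.comp_def] using hT'.conjStarAlgAut_star_eigenvectorUnitary

end SimultaneousDiagonalization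

section ChangeOfVariables

variable {E F : Type*} [NormedAddCommGroup E] [NormedSpace ℝ E] [MeasurableSpace E] [BorelSpace E]
  [FiniteDimensional ℝ E] (μ : Measure E) [μ.IsAddHaarMeasure] [NormedAddCommGroup F]
  {L : E →ₗ[ℝ] E}

theorem measurableEmbedding_of_det_ne_zero (hL : LinearMap.det L ≠ 0) : MeasurableEmbedding L :=
  (L.equivOfDetNeZero hL).toContinuousLinearEquiv.toHomeomorph.measurableEmbedding

theorem integrable_comp_linearMap_iff (hL : LinearMap.det L ≠ 0) {f : E → F} :
    Integrable (fun x => f (L x)) μ ↔ Integrable f μ := by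
  rw [← Function.comp_def, ← (measurableEmbedding_of_det_ne_zero hL).integrable_map_iff,
    Measure.map_linearMap_addHaar_eq_smul_addHaar μ hL,
    integrable_smul_measure (by simpa using hL) ENNReal.ofReal_ne_top]

theorem integral_comp_linearMap [NormedSpace ℝ F] (hL : LinearMap.det L ≠ 0) (f : E → F) :
    ∫ x, f (L x) ∂μ = |(LinearMap.det L)⁻¹| • ∫ x, f x ∂μ := by
  rw [← (measurableEmbedding_of_det_ne_zero hL).integral_map,
    Measure.map_linearMap_addHaar_eq_smul_addHaar μ hL, integral_smul_measure,
    ENNReal.toReal_ofReal (abs_nonneg _)]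

end ChangeOfVariables

section SumElim

variable {ι κ α F : Type*} [Fintype ι] [Fintype κ] [MeasureSpace α]
  [SigmaFinite (volume : Measure α)] [NormedAddCommGroup F]

theorem integrable_comp_sumElim_iff {f : (ι ⊕ κ → α) → F} :
    Integrable (fun p : (ι → α) × (κ → α) => f (Sum.elim p.1 p.2)) ↔ Integrable f :=
  (volume_measurePreserving_sumPiEquivProdPi_symm fun _ : ι ⊕ κ => α).integrable_comp_emb
    (MeasurableEquiv.measurableEmbedding _)

theorem integral_integral_comp_sumElim [NormedSpace ℝ F] {f : (ι ⊕ κ → α) → F}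
    (hf : Integrable f) : ∫ t : ι → α, ∫ u : κ → α, f (Sum.elim t u) = ∫ x, f x := by
  rw [integral_integral (f := fun t u => f (Sum.elim t u)) (integrable_comp_sumElim_iff.mpr hf)]
  exact (volume_measurePreserving_sumPiEquivProdPi_symm fun _ : ι ⊕ κ => α).integral_comp' f

end SumElim

section Complexification

variable {l m n : Type*} [Fintype m]

theorem map_ofReal_mul (A : Matrix l m ℝ) (B : Matrix m n ℝ) :
    (A * B).map Complex.ofReal = A.map Complex.ofReal * B.map Complex.ofReal :=
  Matrix.map_mul (f := Complex.ofRealHom)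

theorem ofReal_comp_mulVec (A : Matrix l m ℝ) (x : m → ℝ) :
    Complex.ofReal ∘ (A *ᵥ x) = A.map Complex.ofReal *ᵥ (Complex.ofReal ∘ x) :=
  funext (Complex.ofRealHom.map_mulVec A x)

theorem ofReal_dotProduct (x y : m → ℝ) :
    ((x ⬝ᵥ y : ℝ) : ℂ) = (Complex.ofReal ∘ x) ⬝ᵥ (Complex.ofReal ∘ y) :=
  Complex.ofRealHom.map_dotProduct x y

end Complexification

section ComplexGaussian

variable {ι : Type*} [Fintype ι]

/-- The Gaussian `x ↦ exp(-π xᵀMx)` on `ℝ^ι` with complex coefficient matrix `M`. -/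
noncomputable def complexGaussian (M : Matrix ι ι ℂ) (x : ι → ℝ) : ℂ :=
  Complex.exp (-π * ((Complex.ofReal ∘ x) ⬝ᵥ M *ᵥ (Complex.ofReal ∘ x)))

theorem complexGaussian_mulVec (M : Matrix ι ι ℂ) (P : Matrix ι ι ℝ) (x : ι → ℝ) :
    complexGaussian M (P *ᵥ x) =
      complexGaussian ((P.map Complex.ofReal)ᵀ * M * P.map Complex.ofReal) x := by
  rw [complexGaussian, complexGaussian, ofReal_comp_mulVec, ← mulVec_mulVec, ← mulVec_mulVec,
    dotProduct_mulVec _ (P.map Complex.ofReal)ᵀ, vecMul_transpose]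

theorem complexGaussian_diagonal [DecidableEq ι] (c : ι → ℂ) (x : ι → ℝ) :
    complexGaussian (diagonal c) x =
      Complex.exp (-∑ i, π * c i * (x i : ℂ) ^ 2 + ∑ i, (0 : ι → ℂ) i * x i) := by
  simp only [complexGaussian, dotProduct, mulVec_diagonal, Function.comp_apply, Pi.zero_apply,
    zero_mul, Finset.sum_const_zero, add_zero, neg_mul, Finset.mul_sum]
  rw [← Finset.sum_neg_distrib]
  refine congrArg Complex.exp <| Finset.sum_congr rfl fun i _ => by ring

theorem integrable_complexGaussian_diagonal [DecidableEq ι] {c : ι → ℂ} (hc : ∀ i, 0 < (c i).re) :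
    Integrable (complexGaussian (diagonal c)) := by
  have hπc : ∀ i, 0 < (π * c i).re := fun i => by
    simpa using mul_pos Real.pi_pos (hc i)
  simpa only [← complexGaussian_diagonal] using
    GaussianFourier.integrable_cexp_neg_sum_mul_add hπc 0

theorem integral_complexGaussian_diagonal_sq [DecidableEq ι] {c : ι → ℂ} (hc : ∀ i, 0 < (c i).re) :
    (∫ x, complexGaussian (diagonal c) x) ^ 2 * ∏ i, c i = 1 := by
  have hπc : ∀ i, 0 < (π * c i).re := fun i => by
    simpa using mul_pos Real.pi_pos (hc i)
  simp only [complexGaussian_diagonal]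
  rw [GaussianFourier.integral_cexp_neg_sum_mul_add hπc 0, ← Finset.prod_pow,
    ← Finset.prod_mul_distrib]
  refine Finset.prod_eq_one fun i _ => ?_
  have hci : c i ≠ 0 := fun h => by simpa [h] using hc i
  have hπ : (π : ℂ) ≠ 0 := Complex.ofReal_ne_zero.mpr Real.pi_ne_zero
  have hsqrt : ((π / (π * c i)) ^ (1 / 2 : ℂ)) ^ 2 = π / (π * c i) := by
    simp [← Complex.cpow_nat_mul]
  simp only [Pi.zero_apply, ne_eq, OfNat.ofNat_ne_zero, not_false_eq_true, zero_pow,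
    zero_div, Complex.exp_zero, mul_one, hsqrt]
  field_simp

theorem exists_transpose_mul_mul_eq_diagonal [DecidableEq ι] {M : Matrix ι ι ℂ} (hM : M.IsSymm)
    (hre : (M.map Complex.re).PosDef) :
    ∃ (P : Matrix ι ι ℝ) (c : ι → ℂ), P.det ≠ 0 ∧ (∀ i, 0 < (c i).re) ∧
      (P.map Complex.ofReal)ᵀ * M * P.map Complex.ofReal = diagonal c := by
  have him : (M.map Complex.im).IsHermitian := by
    rw [IsHermitian, conjTranspose_eq_transpose_of_trivial, ← transpose_map, hM.eq]
  obtain ⟨P, l, hPre, hPim⟩ := exists_simultaneous_diagonalization hre him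
  rw [conjTranspose_eq_transpose_of_trivial] at hPre hPim
  refine ⟨P, fun i => 1 + l i * Complex.I, fun hP => ?_, fun i => by simp, ?_⟩
  · simpa [hP] using congrArg det hPre
  have hM_eq : M = (M.map Complex.re).map Complex.ofReal +
      Complex.I • (M.map Complex.im).map Complex.ofReal := by
    ext i j
    simp [mul_comm Complex.I, Complex.re_add_im]
  have hPM : (P.map Complex.ofReal)ᵀ * M * P.map Complex.ofReal =
      (Pᵀ * M.map Complex.re * P).map Complex.ofReal +
        Complex.I • (Pᵀ * M.map Complex.im * P).map Complex.ofReal := by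
    conv_lhs => rw [hM_eq]
    simp only [map_ofReal_mul, transpose_map, Matrix.mul_add, Matrix.add_mul, Matrix.mul_smul,
      Matrix.smul_mul]
  rw [hPM, hPre, hPim]
  ext i j
  rcases eq_or_ne i j with rfl | hij
  · simp [mul_comm]
  · simp [hij]

theorem integrable_complexGaussian {M : Matrix ι ι ℂ} (hM : M.IsSymm)
    (hre : (M.map Complex.re).PosDef) : Integrable (complexGaussian M) := by
  classical
  obtain ⟨P, c, hP, hc, hPM⟩ := exists_transpose_mul_mul_eq_diagonal hM hre
  rw [← integrable_comp_linearMap_iff volume (L := toLin' P) (by rwa [LinearMap.det_toLin'])]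
  simpa only [toLin'_apply, complexGaussian_mulVec, hPM] using
    integrable_complexGaussian_diagonal hc

theorem integral_complexGaussian_sq_mul_det [DecidableEq ι] {M : Matrix ι ι ℂ} (hM : M.IsSymm)
    (hre : (M.map Complex.re).PosDef) : (∫ x, complexGaussian M x) ^ 2 * M.det = 1 := by
  obtain ⟨P, c, hP, hc, hPM⟩ := exists_transpose_mul_mul_eq_diagonal hM hre
  have hintegral : ∫ x, complexGaussian (diagonal c) x =
      (|P.det⁻¹| : ℝ) * ∫ x, complexGaussian M x := by
    simpa only [toLin'_apply, complexGaussian_mulVec, hPM, LinearMap.det_toLin',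
      Complex.real_smul] using
      integral_comp_linearMap volume (L := toLin' P) (by rwa [LinearMap.det_toLin'])
        (complexGaussian M)
  have hdet : ∏ i, c i = (P.det : ℂ) ^ 2 * M.det := by
    have hPdet : (P.map Complex.ofReal).det = P.det := (Complex.ofRealHom.map_det P).symm
    rw [← det_diagonal, ← hPM, det_mul, det_mul, det_transpose, hPdet]
    ring
  have habs : ((|P.det⁻¹| : ℝ) : ℂ) ^ 2 * (P.det : ℂ) ^ 2 = 1 := by
    rw [← Complex.ofReal_pow, sq_abs, inv_pow, Complex.ofReal_inv, Complex.ofReal_pow,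
      inv_mul_cancel₀ (pow_ne_zero 2 (Complex.ofReal_ne_zero.mpr hP))]
  calc (∫ x, complexGaussian M x) ^ 2 * M.det
      = (((|P.det⁻¹| : ℝ) : ℂ) ^ 2 * (P.det : ℂ) ^ 2) *
          ((∫ x, complexGaussian M x) ^ 2 * M.det) := by rw [habs, one_mul]
    _ = (∫ x, complexGaussian (diagonal c) x) ^ 2 * ∏ i, c i := by rw [hintegral, hdet]; ring
    _ = 1 := integral_complexGaussian_diagonal_sq hc

end ComplexGaussian

theorem fromBlocks_zero₁₂_mulVec_injective {R k l m n : Type*} [Ring R] [Fintype l] [Fintype m]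
    {A : Matrix n l R} {D : Matrix k m R} (hA : Function.Injective A.mulVec)
    (hD : Function.Injective D.mulVec) (C : Matrix k l R) :
    Function.Injective (fromBlocks A 0 C D).mulVec := by
  intro x y hxy
  simp only [fromBlocks_mulVec, zero_mulVec, add_zero] at hxy
  obtain ⟨hl, hr⟩ := Sum.elim_eq_iff.mp hxy
  have hinl : x ∘ Sum.inl = y ∘ Sum.inl := hA hl
  rw [hinl, add_right_inj] at hr
  rw [← Sum.elim_comp_inl_inr x, ← Sum.elim_comp_inl_inr y, hinl, hD hr]

section KernelMatrix

variable {ι m : Type*} [Fintype m] [DecidableEq m]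

/-- The coefficient matrix of the model kernel in the coordinates `(t, u)`: if `νⱼ = (bⱼ, aⱼ)` and
`A`, `B` have columns `aⱼ`, `bⱼ`, then the exponent of the kernel is `-π` times the quadratic form
of this matrix. -/
noncomputable def kernelMatrix (A B : Matrix m ι ℝ) : Matrix (ι ⊕ m) (ι ⊕ m) ℂ :=
  (1 / 2 : ℂ) • fromBlocks ((Aᵀ * A + Bᵀ * B).map Complex.ofReal)
    (Complex.I • A.map Complex.ofReal - B.map Complex.ofReal)ᵀ
    (Complex.I • A.map Complex.ofReal - B.map Complex.ofReal) 1

theorem kernelMatrix_isSymm (A B : Matrix m ι ℝ) : (kernelMatrix A B).IsSymm := by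
  refine IsSymm.smul (IsSymm.fromBlocks ?_ rfl isSymm_one) _
  simp [IsSymm, ← transpose_map]

theorem kernelMatrix_map_re (A B : Matrix m ι ℝ) :
    (kernelMatrix A B).map Complex.re =
      (1 / 2 : ℝ) • ((fromBlocks A 0 (-B) 1)ᵀ * fromBlocks A 0 (-B) (1 : Matrix m m ℝ)) := by
  rw [fromBlocks_transpose, fromBlocks_multiply]
  ext (i | i) (j | j) <;> simp [kernelMatrix, one_apply, apply_ite]

variable [Fintype ι]

theorem kernelMatrix_map_re_posDef {A : Matrix m ι ℝ} (hA : Function.Injective A.mulVec)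
    (B : Matrix m ι ℝ) : ((kernelMatrix A B).map Complex.re).PosDef := by
  have hinj : Function.Injective (fromBlocks A 0 (-B) (1 : Matrix m m ℝ)).mulVec :=
    fromBlocks_zero₁₂_mulVec_injective hA (fun x y h => by simpa using h) (-B)
  rw [kernelMatrix_map_re, ← conjTranspose_eq_transpose_of_trivial]
  exact (PosDef.conjTranspose_mul_self _ hinj).smul (by norm_num)

theorem det_kernelMatrix [DecidableEq ι] {A B : Matrix m ι ℝ} (hAB : (Bᵀ * A).IsSymm) :
    2 ^ Fintype.card m * (kernelMatrix A B).det =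
      ((Aᵀ * A).map Complex.ofReal + Complex.I • (Bᵀ * A).map Complex.ofReal).det := by
  have hsymm : (A.map Complex.ofReal)ᵀ * B.map Complex.ofReal =
      (B.map Complex.ofReal)ᵀ * A.map Complex.ofReal := by
    simpa only [transpose_mul, transpose_transpose, map_ofReal_mul, transpose_map] using
      congrArg (Matrix.map · Complex.ofReal) hAB.eq
  have hschur : (Aᵀ * A + Bᵀ * B).map Complex.ofReal -
        (Complex.I • A.map Complex.ofReal - B.map Complex.ofReal)ᵀ *
          (Complex.I • A.map Complex.ofReal - B.map Complex.ofReal) =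
      (2 : ℂ) • ((Aᵀ * A).map Complex.ofReal + Complex.I • (Bᵀ * A).map Complex.ofReal) := by
    simp only [Matrix.map_add _ Complex.ofReal_add, map_ofReal_mul, transpose_map, transpose_sub,
      transpose_smul, Matrix.sub_mul, Matrix.mul_sub, Matrix.smul_mul, Matrix.mul_smul, smul_sub,
      smul_smul, Complex.I_mul_I, hsymm]
    module
  rw [kernelMatrix, det_smul, det_fromBlocks_one₂₂, hschur, det_smul, Fintype.card_sum, pow_add]
  simp only [one_div, inv_pow]
  field_simp

theorem complexGaussian_kernelMatrix (A B : Matrix m ι ℝ) (t : ι → ℝ) (u : m → ℝ) :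
    complexGaussian (kernelMatrix A B) (Sum.elim t u) =
      Complex.exp (-(π / 2) * ((u - B *ᵥ t) ⬝ᵥ (u - B *ᵥ t) + (A *ᵥ t) ⬝ᵥ (A *ᵥ t) : ℝ)
        - π * Complex.I * (u ⬝ᵥ A *ᵥ t : ℝ)) := by
  rw [complexGaussian, kernelMatrix, Sum.comp_elim, Matrix.smul_mulVec, fromBlocks_mulVec,
    Sum.elim_comp_inl, Sum.elim_comp_inr, dotProduct_smul, sumElim_dotProduct_sumElim]
  have htrans (X : Matrix m ι ℂ) (x : ι → ℂ) (y : m → ℂ) : x ⬝ᵥ Xᵀ *ᵥ y = X *ᵥ x ⬝ᵥ y := by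
    rw [dotProduct_mulVec, vecMul_transpose]
  simp only [dotProduct_sub, sub_dotProduct, Complex.ofReal_add, Complex.ofReal_sub,
    ofReal_dotProduct, ofReal_comp_mulVec, Matrix.map_add _ Complex.ofReal_add,
    map_ofReal_mul, transpose_map, add_mulVec, sub_mulVec, smul_mulVec, ← mulVec_mulVec,
    one_mulVec, dotProduct_add, dotProduct_smul, smul_dotProduct, htrans, smul_eq_mul]
  rw [dotProduct_comm (A.map Complex.ofReal *ᵥ _) (_ ∘ u),
    dotProduct_comm (B.map Complex.ofReal *ᵥ _) (_ ∘ u)]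
  congr 1
  ring

end KernelMatrix

section Frame

variable {n d : ℕ}

/-- The family `νⱼ = (bⱼ, aⱼ)` in `ℝ^{2n}`, where `aⱼ` and `bⱼ` are the columns of `A` and `B`. -/
def frame (A B : Matrix (Fin n) (Fin d) ℝ) (j : Fin d) : RR2 n := (B.col j, A.col j)

theorem stdSymp_eVec (i : Fin n) (Z : RR2 n) : stdSymp (eVec i) Z = Z.2 i := by
  simp [stdSymp, eVec, Pi.single_apply]

theorem stdInner_eVec (i : Fin n) (Z : RR2 n) : stdInner (eVec i) Z = Z.1 i := by
  simp [stdInner, eVec, Pi.single_apply]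

theorem eq_frame {ν : Fin d → RR2 n} {A B : Matrix (Fin n) (Fin d) ℝ}
    (hA : ∀ i j, A i j = stdSymp (eVec i) (ν j)) (hB : ∀ i j, B i j = stdInner (eVec i) (ν j)) :
    ν = frame A B := by
  ext j i <;> simp [frame, hA, hB, stdSymp_eVec, stdInner_eVec]

theorem sum_smul_eVec (u : Fin n → ℝ) : ∑ i, u i • eVec i = ((u, 0) : RR2 n) := by
  ext i <;> simp [eVec, Prod.fst_sum, Prod.snd_sum, Finset.sum_apply, Pi.single_apply]

theorem sum_smul_frame (A B : Matrix (Fin n) (Fin d) ℝ) (t : Fin d → ℝ) :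
    ∑ j, t j • frame A B j = (B *ᵥ t, A *ᵥ t) := by
  ext i <;> simp [frame, Prod.fst_sum, Prod.snd_sum, mulVec, dotProduct, mul_comm]

theorem modelKernel_frame (A B : Matrix (Fin n) (Fin d) ℝ) (t : Fin d → ℝ) (u : Fin n → ℝ) :
    modelKernel (frame A B) t u = complexGaussian (kernelMatrix A B) (Sum.elim t u) := by
  rw [complexGaussian_kernelMatrix]
  simp [modelKernel, sum_smul_eVec, sum_smul_frame, stdInner, stdSymp, dotProduct]

theorem stdSymp_frame (A B : Matrix (Fin n) (Fin d) ℝ) (j k : Fin d) :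
    stdSymp (frame A B j) (frame A B k) = (Bᵀ * A - Aᵀ * B) j k := by
  simp [stdSymp, frame, mul_apply]

theorem isSymm_transpose_mul_of_isotropic {A B : Matrix (Fin n) (Fin d) ℝ}
    (hiso : ∀ j k, stdSymp (frame A B j) (frame A B k) = 0) : (Bᵀ * A).IsSymm := by
  have h : Bᵀ * A - Aᵀ * B = 0 := by
    ext j k
    rw [← stdSymp_frame, hiso, Matrix.zero_apply]
  rw [IsSymm, transpose_mul, transpose_transpose, sub_eq_zero.mp h]

theorem span_range_eVec :
    Submodule.span ℝ (Set.range (eVec (n := n))) =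
      LinearMap.ker (LinearMap.snd ℝ (Fin n → ℝ) (Fin n → ℝ)) := by
  have heVec : eVec = LinearMap.inl ℝ (Fin n → ℝ) (Fin n → ℝ) ∘ Pi.basisFun ℝ (Fin n) := by
    ext i : 1
    simp [eVec]
  rw [heVec, Set.range_comp, Submodule.span_image, Module.Basis.span_eq, Submodule.map_top,
    LinearMap.ker_snd]

theorem mulVec_injective_of_transverse {A B : Matrix (Fin n) (Fin d) ℝ}
    (hν : LinearIndependent ℝ (frame A B))
    (hspan : Submodule.span ℝ (Set.range (frame A B)) ⊓
        Submodule.span ℝ (Set.range (eVec (n := n))) = ⊥) :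
    Function.Injective A.mulVec := by
  rw [span_range_eVec, ← disjoint_iff] at hspan
  exact mulVec_injective_iff.mpr (hν.map hspan)

/-- `stdInner` as a bilinear form. -/
def stdInnerForm (n : ℕ) : LinearMap.BilinForm ℝ (RR2 n) :=
  (dotProductBilin ℝ ℝ).compl₁₂ (.fst ..) (.fst ..) +
    (dotProductBilin ℝ ℝ).compl₁₂ (.snd ..) (.snd ..)

theorem linearIndependent_of_orthonormal {ι : Type*} [DecidableEq ι] {ν : ι → RR2 n}
    (hortho : ∀ j k, stdInner (ν j) (ν k) = if j = k then 1 else 0) :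
    LinearIndependent ℝ ν := by
  refine LinearMap.linearIndependent_of_isOrthoᵢ (B := stdInnerForm n)
    (fun j k hjk => ?_) fun j => ?_
  · exact (hortho j k).trans (if_neg hjk)
  · rw [show stdInnerForm n (ν j) (ν j) = 1 from (hortho j j).trans (if_pos rfl)]
    exact one_ne_zero

end Frame

theorem stmt_6_general {n d : ℕ} {ν : Fin d → RR2 n} (hν : LinearIndependent ℝ ν)
    (hiso : ∀ j k, stdSymp (ν j) (ν k) = 0)
    (hspan : Submodule.span ℝ (Set.range ν) ⊓
        Submodule.span ℝ (Set.range (eVec (n := n))) = ⊥)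
    {A B : Matrix (Fin n) (Fin d) ℝ}
    (hA : ∀ i j, A i j = stdSymp (eVec i) (ν j))
    (hB : ∀ i j, B i j = stdInner (eVec i) (ν j)) :
    Integrable (fun p : (Fin d → ℝ) × (Fin n → ℝ) => modelKernel ν p.1 p.2)
    ∧ (∫ t : Fin d → ℝ, ∫ u : Fin n → ℝ, modelKernel ν t u) ^ 2
        * ((A.transpose * A).map Complex.ofReal
            + Complex.I • (B.transpose * A).map Complex.ofReal).det
      = 2 ^ n := by
  obtain rfl : ν = frame A B := eq_frame hA hB
  have hsymm := kernelMatrix_isSymm A B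
  have hre := kernelMatrix_map_re_posDef (mulVec_injective_of_transverse hν hspan) B
  have hintegral := integrable_complexGaussian hsymm hre
  simp only [modelKernel_frame]
  refine ⟨integrable_comp_sumElim_iff.mpr hintegral, ?_⟩
  rw [integral_integral_comp_sumElim hintegral,
    ← det_kernelMatrix (isSymm_transpose_mul_of_isotropic hiso), Fintype.card_fin, mul_left_comm,
    integral_complexGaussian_sq_mul_det hsymm hre, mul_one]

/-- Evaluation of the model Gaussian integral over a Lagrangian subspace and an isotropic
subspace of dimension `d` meeting it only at `0`: the double integral `I` converges
absolutely and `I² · det(AᵀA + √-1 BᵀA) = 2ⁿ`. -/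
theorem stmt_6 (n d : ℕ) (hd : 1 ≤ d) (hdn : d ≤ n) (ν : Fin d → RR2 n)
    (hortho : ∀ j k, stdInner (ν j) (ν k) = if j = k then 1 else 0)
    (hiso : ∀ j k, stdSymp (ν j) (ν k) = 0)
    (hspan : Submodule.span ℝ (Set.range ν) ⊓
        Submodule.span ℝ (Set.range (eVec (n := n))) = ⊥)
    (A B : Matrix (Fin n) (Fin d) ℝ)
    (hA : ∀ i j, A i j = stdSymp (eVec i) (ν j))
    (hB : ∀ i j, B i j = stdInner (eVec i) (ν j)) :
    Integrable (fun p : (Fin d → ℝ) × (Fin n → ℝ) => modelKernel ν p.1 p.2)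
    ∧ (∫ t : Fin d → ℝ, ∫ u : Fin n → ℝ, modelKernel ν t u) ^ 2
        * ((A.transpose * A).map Complex.ofReal
            + Complex.I • (B.transpose * A).map Complex.ofReal).det
      = 2 ^ n :=
  stmt_6_general (linearIndependent_of_orthonormal hortho) hiso hspan hA hB
end

section
/- Let p ≥ 1 be an integer and let g : ℍ → ℂ be a measurable function with ∫_{ℍ} |g(w)|² (Im w)^{2p−2} dA(w) < ∞. Then the function z ↦ ∫_{ℍ} g(w) · (z − conj(w))^{−2p} · (Im w)^{2p−2} dA(w) is well defined (the integrand is integrable for each z ∈ ℍ) and is holomorphic on ℍ. -/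
open MeasureTheory

/-!
For `z` in the upper half-plane, `c = conj w` stays at distance at least `δ = Im z` from `z`, hence
`‖z₀ - c‖ ≤ (1 + ‖z - z₀‖ / δ) * ‖z - c‖`. The kernels `(z - c)⁻ⁿ` at two points are therefore
comparable uniformly in `c`, so integrability at one point gives integrability at all points,
with the locally uniform domination needed to differentiate under the integral sign. It remains to
treat `z = i` with the weight `(Im w)ᵐ`, where `|g * h| ≤ |g|² + |h|²` reduces the claim to the
convergence of `∫ |i - conj w|⁻²ⁿ (Im w)ᵐ`. This holds for `m + 2 < 2n`, since
`|i - conj w|² ≥ (Im w)²` and `|i - conj w|² ≥ 1 + |w|²`.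
-/

section InvSubPow

lemma ne_of_le_norm_sub {E : Type*} [NormedAddCommGroup E] {δ : ℝ} (hδ : 0 < δ) {z c : E}
    (hz : δ ≤ ‖z - c‖) : z ≠ c :=
  sub_ne_zero.mp (norm_pos_iff.mp (hδ.trans_le hz))

lemma norm_sub_le_one_add_div_mul_norm_sub {E : Type*} [SeminormedAddCommGroup E] {δ : ℝ}
    (hδ : 0 < δ) {z₀ z c : E} (hz : δ ≤ ‖z - c‖) :
    ‖z₀ - c‖ ≤ (1 + ‖z - z₀‖ / δ) * ‖z - c‖ := by
  calc ‖z₀ - c‖ ≤ ‖z - z₀‖ + ‖z - c‖ := by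
        simpa only [norm_sub_rev z₀ z] using norm_sub_le_norm_sub_add_norm_sub z₀ z c
    _ = ‖z - z₀‖ / δ * δ + ‖z - c‖ := by rw [div_mul_cancel₀ _ hδ.ne']
    _ ≤ ‖z - z₀‖ / δ * ‖z - c‖ + ‖z - c‖ := by gcongr
    _ = (1 + ‖z - z₀‖ / δ) * ‖z - c‖ := by ring

lemma norm_inv_sub_pow_le {𝕜 : Type*} [NormedField 𝕜] {δ : ℝ} (hδ : 0 < δ) {z₀ z c : 𝕜}
    (hz₀ : z₀ ≠ c) (hz : δ ≤ ‖z - c‖) (n : ℕ) :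
    ‖((z - c) ^ n)⁻¹‖ ≤ (1 + ‖z - z₀‖ / δ) ^ n * ‖((z₀ - c) ^ n)⁻¹‖ := by
  have hz₀_pos : 0 < ‖z₀ - c‖ := norm_pos_iff.mpr (sub_ne_zero.mpr hz₀)
  have hz_pos : 0 < ‖z - c‖ := hδ.trans_le hz
  simp only [norm_inv, norm_pow]
  rw [← div_eq_mul_inv, inv_le_iff_one_le_mul₀ (by positivity), div_mul_eq_mul_div,
    one_le_div₀ (by positivity), ← mul_pow]
  gcongr
  exact norm_sub_le_one_add_div_mul_norm_sub hδ hz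

lemma hasDerivAt_inv_sub_pow {𝕜 : Type*} [NontriviallyNormedField 𝕜] {z c : 𝕜} (hz : z ≠ c)
    (n : ℕ) :
    HasDerivAt (fun z => ((z - c) ^ n)⁻¹) (-n / (z - c) * ((z - c) ^ n)⁻¹) z := by
  have hzc : z - c ≠ 0 := sub_ne_zero.mpr hz
  have hderiv := (hasDerivAt_zpow (-n) (z - c) (.inl hzc)).comp_sub_const z c
  simp only [zpow_neg, zpow_natCast] at hderiv
  refine hderiv.congr_deriv ?_
  rw [zpow_sub_one₀ hzc, zpow_neg, zpow_natCast]
  push_cast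
  ring

lemma half_le_norm_sub_of_mem_ball {E : Type*} [SeminormedAddCommGroup E] {δ : ℝ} {z₀ z c : E}
    (hz₀ : δ ≤ ‖z₀ - c‖) (hz : z ∈ Metric.ball z₀ (δ / 2)) : δ / 2 ≤ ‖z - c‖ := by
  have htri := norm_sub_le_norm_sub_add_norm_sub z₀ z c
  rw [norm_sub_rev z₀ z] at htri
  linarith [mem_ball_iff_norm.mp hz]

lemma norm_deriv_inv_sub_pow_le_of_mem_ball {𝕜 : Type*} [RCLike 𝕜] {δ : ℝ} (hδ : 0 < δ)
    {z₀ z c : 𝕜} (hz₀ : δ ≤ ‖z₀ - c‖) (hz : z ∈ Metric.ball z₀ (δ / 2)) (n : ℕ) :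
    ‖-n / (z - c) * ((z - c) ^ n)⁻¹‖ ≤ n / (δ / 2) * 2 ^ n * ‖((z₀ - c) ^ n)⁻¹‖ := by
  have hδ2 : 0 < δ / 2 := half_pos hδ
  have hzc : δ / 2 ≤ ‖z - c‖ := half_le_norm_sub_of_mem_ball hz₀ hz
  have hz₀c : z₀ ≠ c := ne_of_le_norm_sub hδ hz₀
  have hdist : ‖z - z₀‖ / (δ / 2) ≤ 1 := (div_le_one hδ2).mpr (mem_ball_iff_norm.mp hz).le
  rw [norm_mul, norm_div, norm_neg, RCLike.norm_natCast, mul_assoc]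
  gcongr
  calc ‖((z - c) ^ n)⁻¹‖ ≤ (1 + ‖z - z₀‖ / (δ / 2)) ^ n * ‖((z₀ - c) ^ n)⁻¹‖ :=
        norm_inv_sub_pow_le hδ2 hz₀c hzc n
    _ ≤ 2 ^ n * ‖((z₀ - c) ^ n)⁻¹‖ := by gcongr; linarith

variable {α 𝕜 E : Type*} [MeasurableSpace α] {μ : Measure α} [RCLike 𝕜]
  [NormedAddCommGroup E] [NormedSpace 𝕜 E] {φ : α → 𝕜} {f : α → E} {n : ℕ}
  {δ : ℝ} {z₀ z : 𝕜}

lemma integrable_inv_sub_pow_smul_of_integrable (hφ : AEMeasurable φ μ) (hδ : 0 < δ)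
    (hz₀ : ∀ᵐ a ∂μ, z₀ ≠ φ a) (hz : ∀ᵐ a ∂μ, δ ≤ ‖z - φ a‖)
    (hint : Integrable (fun a => ((z₀ - φ a) ^ n)⁻¹ • f a) μ) :
    Integrable (fun a => ((z - φ a) ^ n)⁻¹ • f a) μ := by
  have hratio : AEStronglyMeasurable (fun a => ((z - φ a) ^ n)⁻¹ * (z₀ - φ a) ^ n) μ :=
    (by fun_prop : AEMeasurable _ μ).aestronglyMeasurable
  refine (hint.bdd_smul ((1 + ‖z - z₀‖ / δ) ^ n) hratio ?_).congr ?_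
  · filter_upwards [hz₀, hz] with a hz₀a hza
    have hpow : 0 < ‖(z₀ - φ a) ^ n‖ := norm_pos_iff.mpr (pow_ne_zero n (sub_ne_zero.mpr hz₀a))
    rw [norm_mul, ← le_div_iff₀ hpow, div_eq_mul_inv, ← norm_inv]
    exact norm_inv_sub_pow_le hδ hz₀a hza n
  · filter_upwards [hz₀] with a hz₀a
    simp only [Pi.smul_apply', smul_smul]
    rw [mul_inv_cancel_right₀ (pow_ne_zero n (sub_ne_zero.mpr hz₀a))]

theorem hasDerivAt_integral_inv_sub_pow_smul [NormedSpace ℝ E] (hφ : AEMeasurable φ μ)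
    (hδ : 0 < δ) (hz₀ : ∀ᵐ a ∂μ, δ ≤ ‖z₀ - φ a‖)
    (hint : Integrable (fun a => ((z₀ - φ a) ^ n)⁻¹ • f a) μ) :
    HasDerivAt (fun z => ∫ a, ((z - φ a) ^ n)⁻¹ • f a ∂μ)
      (∫ a, (-n / (z₀ - φ a) * ((z₀ - φ a) ^ n)⁻¹) • f a ∂μ) z₀ := by
  have hδ2 : 0 < δ / 2 := half_pos hδ
  have hball : ∀ᵐ a ∂μ, ∀ z ∈ Metric.ball z₀ (δ / 2), δ / 2 ≤ ‖z - φ a‖ :=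
    hz₀.mono fun a hz₀a z => half_le_norm_sub_of_mem_ball hz₀a
  refine (hasDerivAt_integral_of_dominated_loc_of_deriv_le
    (F' := fun z a => (-n / (z - φ a) * ((z - φ a) ^ n)⁻¹) • f a)
    (bound := fun a => n / (δ / 2) * 2 ^ n * ‖((z₀ - φ a) ^ n)⁻¹ • f a‖)
    (Metric.ball_mem_nhds z₀ hδ2) ?_ hint ?_ ?_ (hint.norm.const_mul _) ?_).2
  · filter_upwards [Metric.ball_mem_nhds z₀ hδ2] with z hz
    have hz_int := integrable_inv_sub_pow_smul_of_integrable hφ hδ2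
      (hz₀.mono fun a => ne_of_le_norm_sub hδ) (hball.mono fun a ha => ha z hz) hint
    exact hz_int.aestronglyMeasurable
  · simp only [mul_smul]
    exact (by fun_prop : AEMeasurable (fun a => -n / (z₀ - φ a)) μ).aestronglyMeasurable.smul
      hint.aestronglyMeasurable
  · filter_upwards [hz₀] with a hz₀a z hz
    rw [norm_smul, norm_smul, ← mul_assoc]
    gcongr
    exact norm_deriv_inv_sub_pow_le_of_mem_ball hδ hz₀a hz n
  · filter_upwards [hball] with a hballa z hz
    exact (hasDerivAt_inv_sub_pow (ne_of_le_norm_sub hδ2 (hballa z hz)) n).smul_const (f a)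

end InvSubPow

lemma integrable_mul_mul_of_integrable_norm_sq_mul {α 𝕜 : Type*} [MeasurableSpace α]
    {μ : Measure α} [RCLike 𝕜] {g h : α → 𝕜} {ω : α → ℝ} (hω : ∀ᵐ a ∂μ, 0 ≤ ω a)
    (hmeas : AEStronglyMeasurable (fun a => g a * h a * (ω a : 𝕜)) μ)
    (hg : Integrable (fun a => ‖g a‖ ^ 2 * ω a) μ)
    (hh : Integrable (fun a => ‖h a‖ ^ 2 * ω a) μ) :
    Integrable (fun a => g a * h a * (ω a : 𝕜)) μ := by
  refine (hg.add hh).mono' hmeas ?_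
  filter_upwards [hω] with a ha
  rw [norm_mul, norm_mul, RCLike.norm_of_nonneg ha, Pi.add_apply, ← add_mul]
  gcongr
  nlinarith [two_mul_le_add_sq ‖g a‖ ‖h a‖, sq_nonneg ‖g a‖, sq_nonneg ‖h a‖]

section UpperHalfPlane

open Complex ComplexConjugate

lemma ae_restrict_im_pos : ∀ᵐ w : ℂ ∂volume.restrict {w : ℂ | 0 < w.im}, 0 < w.im :=
  ae_restrict_mem UpperHalfPlane.isOpen_upperHalfPlaneSet.measurableSet

lemma im_add_im_le_norm_sub_conj (z w : ℂ) : z.im + w.im ≤ ‖z - conj w‖ := by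
  simpa using im_le_norm (z - conj w)

lemma one_add_norm_sq_le_norm_I_sub_conj_sq {w : ℂ} (hw : 0 ≤ w.im) :
    1 + ‖w‖ ^ 2 ≤ ‖I - conj w‖ ^ 2 := by
  simp only [Complex.sq_norm, normSq_apply, sub_re, sub_im, I_re, I_im, conj_re, conj_im]
  linarith

lemma norm_inv_I_sub_conj_pow_sq_mul_im_pow_le {w : ℂ} (hw : 0 ≤ w.im) {m n : ℕ}
    (hmn : m ≤ 2 * n) :
    ‖((I - conj w) ^ n)⁻¹‖ ^ 2 * w.im ^ m ≤ (1 + ‖w‖ ^ 2) ^ (-((2 * n - m : ℕ) : ℝ) / 2) := by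
  have him : 1 + w.im ≤ ‖I - conj w‖ := im_add_im_le_norm_sub_conj I w
  have hsq := one_add_norm_sq_le_norm_I_sub_conj_sq hw
  obtain ⟨k, hk⟩ := Nat.exists_eq_add_of_le hmn
  rw [norm_inv, norm_pow, inv_pow, ← pow_mul, mul_comm n, hk, Nat.add_sub_cancel_left]
  set d := ‖I - conj w‖
  have hd : 0 < d := by linarith
  calc (d ^ (m + k))⁻¹ * w.im ^ m
      ≤ (d ^ (m + k))⁻¹ * d ^ m := by gcongr; linarith
    _ = (d ^ k)⁻¹ := by rw [pow_add]; field_simp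
    _ = (d ^ 2) ^ (-(k : ℝ) / 2) := by
      rw [← Real.rpow_natCast_mul hd.le, Nat.cast_ofNat, mul_div_cancel₀ _ two_ne_zero,
        Real.rpow_neg hd.le, Real.rpow_natCast]
    _ ≤ (1 + ‖w‖ ^ 2) ^ (-(k : ℝ) / 2) :=
      Real.rpow_le_rpow_of_nonpos (by positivity) hsq (by linarith [k.cast_nonneg (α := ℝ)])

lemma integrableOn_norm_inv_I_sub_conj_pow_sq_mul_im_pow {m n : ℕ} (hmn : m + 2 < 2 * n) :
    IntegrableOn (fun w : ℂ => ‖((I - conj w) ^ n)⁻¹‖ ^ 2 * w.im ^ m) {w : ℂ | 0 < w.im} := by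
  have hdim : (Module.finrank ℝ ℂ : ℝ) < (2 * n - m : ℕ) := by
    rw [finrank_real_complex]
    exact_mod_cast (by omega : 2 < 2 * n - m)
  refine (integrable_rpow_neg_one_add_norm_sq hdim).integrableOn.mono'
    (by fun_prop : Measurable _).aestronglyMeasurable ?_
  filter_upwards [ae_restrict_im_pos] with w hw
  rw [Real.norm_of_nonneg (by positivity)]
  exact norm_inv_I_sub_conj_pow_sq_mul_im_pow_le hw.le (by omega)

lemma integrableOn_mul_inv_I_sub_conj_pow_mul_im_pow {m n : ℕ} (hmn : m + 2 < 2 * n) {g : ℂ → ℂ}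
    (hg : AEStronglyMeasurable g (volume.restrict {w : ℂ | 0 < w.im}))
    (hint : IntegrableOn (fun w : ℂ => ‖g w‖ ^ 2 * w.im ^ m) {w : ℂ | 0 < w.im}) :
    IntegrableOn (fun w : ℂ => g w * ((I - conj w) ^ n)⁻¹ * (w.im : ℂ) ^ m)
      {w : ℂ | 0 < w.im} := by
  have hkernel : Measurable fun w : ℂ => ((I - conj w) ^ n)⁻¹ := by fun_prop
  have hweight : Measurable fun w : ℂ => ((w.im ^ m : ℝ) : ℂ) := by fun_prop
  simp only [← ofReal_pow]
  exact integrable_mul_mul_of_integrable_norm_sq_mul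
    (ae_restrict_im_pos.mono fun w hw => pow_nonneg hw.le m)
    ((hg.mul hkernel.aestronglyMeasurable).mul hweight.aestronglyMeasurable) hint
    (integrableOn_norm_inv_I_sub_conj_pow_sq_mul_im_pow hmn)

theorem stmt_9_general {m n : ℕ} (hmn : m + 2 < 2 * n) {g : ℂ → ℂ}
    (hg : AEStronglyMeasurable g (volume.restrict {z : ℂ | 0 < z.im}))
    (hint : IntegrableOn (fun w : ℂ => ‖g w‖ ^ 2 * w.im ^ m) {z : ℂ | 0 < z.im}) :
    (∀ z ∈ {z : ℂ | 0 < z.im},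
      IntegrableOn (fun w : ℂ => g w * ((z - conj w) ^ n)⁻¹ * (w.im : ℂ) ^ m) {z : ℂ | 0 < z.im})
    ∧ DifferentiableOn ℂ
        (fun z : ℂ => ∫ w in {z : ℂ | 0 < z.im}, g w * ((z - conj w) ^ n)⁻¹ * (w.im : ℂ) ^ m)
        {z : ℂ | 0 < z.im} := by
  have hdist (z : ℂ) : ∀ᵐ w : ℂ ∂volume.restrict {z : ℂ | 0 < z.im}, z.im ≤ ‖z - conj w‖ :=
    ae_restrict_im_pos.mono fun w hw => by linarith [im_add_im_le_norm_sub_conj z w]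
  have hconj : AEMeasurable (fun w : ℂ => conj w) (volume.restrict {z : ℂ | 0 < z.im}) := by
    fun_prop
  have hsmul (z w : ℂ) : g w * ((z - conj w) ^ n)⁻¹ * (w.im : ℂ) ^ m =
      ((z - conj w) ^ n)⁻¹ • (g w * (w.im : ℂ) ^ m) := by
    rw [smul_eq_mul]; ring
  have hI := integrableOn_mul_inv_I_sub_conj_pow_mul_im_pow hmn hg hint
  have hI_ne : ∀ᵐ w : ℂ ∂volume.restrict {z : ℂ | 0 < z.im}, I ≠ conj w :=
    (hdist I).mono fun w => ne_of_le_norm_sub one_pos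
  simp only [hsmul] at hI ⊢
  have hz_int (z : ℂ) (hz : 0 < z.im) :=
    integrable_inv_sub_pow_smul_of_integrable hconj hz hI_ne (hdist z) hI
  exact ⟨hz_int, fun z hz => (hasDerivAt_integral_inv_sub_pow_smul hconj hz (hdist z)
    (hz_int z hz)).differentiableAt.differentiableWithinAt⟩

end UpperHalfPlane

/-- The Bergman projection integral of a weighted-`L²` function `g` against the kernel
`(z - conj w)^{-2p} (Im w)^{2p-2}` is well defined and holomorphic on the upper half-plane. -/
theorem stmt_9 (p : ℕ) (hp : 1 ≤ p) (g : ℂ → ℂ) (hg : Measurable g)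
    (hint : IntegrableOn (fun w : ℂ => ‖g w‖ ^ 2 * w.im ^ (2 * p - 2)) {z : ℂ | 0 < z.im}) :
    (∀ z ∈ {z : ℂ | 0 < z.im},
      IntegrableOn
        (fun w : ℂ => g w * ((z - (starRingEnd ℂ) w) ^ (2 * p))⁻¹ * ((w.im : ℂ)) ^ (2 * p - 2))
        {z : ℂ | 0 < z.im})
    ∧ DifferentiableOn ℂ
        (fun z : ℂ => ∫ w in {z : ℂ | 0 < z.im},
          g w * ((z - (starRingEnd ℂ) w) ^ (2 * p))⁻¹ * ((w.im : ℂ)) ^ (2 * p - 2))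
        {z : ℂ | 0 < z.im} :=
  stmt_9_general (by omega) hg.aestronglyMeasurable hint
end

section
/- Let p ≥ 1 be an integer and let f : ℍ → ℂ be holomorphic on ℍ = {z ∈ ℂ : Im z > 0} with ∫_{ℍ} |f(w)|² (Im w)^{2p−2} dA(w) < ∞. Then for every z ∈ ℍ, f(z) = c_p · ∫_{ℍ} f(w) · (z − conj(w))^{−2p} · (Im w)^{2p−2} dA(w), where c_p = (−1)^p · 2^{2p−2} · (2p−1) / π. -/
/-!
Fix `z` in the upper half-plane. The Cayley transform `w = cayley z ζ` sends the unit disc onto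
the half-plane and `0` to `z`. With `y = Im z` one has
`Im w = y (1 - |ζ|²) / |1 - ζ|²`, `z - conj w = 2 i y / conj (1 - ζ)` and Jacobian
`4 y² / |1 - ζ|⁴`, so in the disc coordinate all anti-holomorphic factors cancel and the integral
becomes a constant times `∫ g(ζ) (1 - |ζ|²) ^ n dA(ζ)`, where
`g(ζ) = f(cayley z ζ) / (1 - ζ) ^ (n + 2)` is holomorphic and `g 0 = f z`. Since the weight is
radial, the mean value property on circles evaluates this to `π / (n + 1) * f z`.

The same change of variables turns `∫ |f(w)|² (Im w) ^ n dA(w)` into a constant times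
`∫ |g(ζ)|² (1 - |ζ|²) ^ n dA(ζ)`. The weight has finite mass on the disc, so finiteness of the
latter makes `g(ζ) (1 - |ζ|²) ^ n` integrable.
-/

open MeasureTheory
open scoped Real

open Complex Metric Set ComplexConjugate
open UpperHalfPlane (upperHalfPlaneSet)

section PolarCoordinates

variable {E : Type*} [NormedAddCommGroup E] [NormedSpace ℝ E]

theorem integrableOn_polarCoord_symm_iff {F : ℂ → E} :
    IntegrableOn (fun q : ℝ × ℝ ↦ q.1 • F (Complex.polarCoord.symm q)) polarCoord.target ↔
      Integrable F := by
  have jacobian := integrableOn_image_iff_integrableOn_abs_det_fderiv_smul volume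
    polarCoord.open_target.measurableSet
    (fun q _ ↦ (hasFDerivAt_polarCoord_symm q).hasFDerivWithinAt) polarCoord.symm.injOn
    (fun q : ℝ × ℝ ↦ F (measurableEquivRealProd.symm q))
  rw [polarCoord.symm_image_target_eq_source,
    integrableOn_congr_set_ae polarCoord_source_ae_eq_univ, integrableOn_univ] at jacobian
  rw [← volume_preserving_equiv_real_prod.symm.integrable_comp_emb
    measurableEquivRealProd.symm.measurableEmbedding]
  refine (integrableOn_congr_fun (fun q hq ↦ ?_) polarCoord.open_target.measurableSet).trans
    jacobian.symm
  rw [det_fderivPolarCoordSymm, abs_of_pos hq.1, measurableEquivRealProd_symm_polarCoord_symm_apply]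

theorem circleMap_eq_add_polarCoord_symm (c : ℂ) (r θ : ℝ) :
    circleMap c r θ = c + Complex.polarCoord.symm (r, θ) := by
  simp [circleMap, exp_mul_I]

theorem integral_circleMap_eq_circleAverage (F : ℂ → E) (c : ℂ) (r : ℝ) :
    ∫ θ in Ioo (-π) π, F (circleMap c r θ) = (2 * π) • Real.circleAverage F c r := by
  rw [Real.circleAverage_eq_integral_add (-π),
    intervalIntegral.integral_comp_add_right (fun θ ↦ F (circleMap c r θ)),
    smul_inv_smul₀ Real.two_pi_pos.ne', ← integral_Ioc_eq_integral_Ioo,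
    ← intervalIntegral.integral_of_le (by linarith [Real.pi_pos])]
  congr 1 <;> ring

theorem integral_eq_integral_circleAverage {F : ℂ → E} (hF : Integrable F) (c : ℂ) :
    ∫ ζ, F ζ = (2 * π) • ∫ r in Ioi (0 : ℝ), r • Real.circleAverage F c r := by
  have polar_integrable := integrableOn_polarCoord_symm_iff.2 (hF.comp_add_left c)
  rw [polarCoord_target, Measure.volume_eq_prod] at polar_integrable
  rw [← integral_add_left_eq_self F c, ← Complex.integral_comp_polarCoord_symm, polarCoord_target,
    Measure.volume_eq_prod, setIntegral_prod _ polar_integrable, ← integral_smul]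
  refine setIntegral_congr_fun measurableSet_Ioi fun r _ ↦ ?_
  simp only [← circleMap_eq_add_polarCoord_symm]
  rw [integral_smul, integral_circleMap_eq_circleAverage, smul_comm]

theorem setIntegral_ball_eq_integral_circleAverage [CompleteSpace E] {F : ℂ → E} {c : ℂ} {R : ℝ}
    (hF : IntegrableOn F (ball c R)) :
    ∫ ζ in ball c R, F ζ = (2 * π) • ∫ r in Ioo 0 R, r • Real.circleAverage F c r := by
  rw [← integral_indicator measurableSet_ball,
    integral_eq_integral_circleAverage ((integrable_indicator_iff measurableSet_ball).2 hF) c,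
    ← Ioi_inter_Iio, ← setIntegral_indicator measurableSet_Iio]
  congr 1
  refine setIntegral_congr_fun measurableSet_Ioi fun r (hr : 0 < r) ↦ ?_
  have mem_ball_iff {ζ : ℂ} (hζ : ζ ∈ sphere c |r|) : ζ ∈ ball c R ↔ r < R := by
    rw [mem_ball, mem_sphere.1 hζ, abs_of_pos hr]
  by_cases hrR : r < R
  · rw [indicator_of_mem (mem_Iio.2 hrR)]
    congr 1
    exact Real.circleAverage_congr_sphere fun ζ hζ ↦ indicator_of_mem ((mem_ball_iff hζ).2 hrR) F
  · rw [indicator_of_notMem (notMem_Iio.2 (not_lt.1 hrR)), Real.circleAverage_const_on_circle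
      fun ζ hζ ↦ indicator_of_notMem (mt (mem_ball_iff hζ).1 hrR) F, smul_zero]

end PolarCoordinates

section WeightedMeanValue

variable {E : Type*} [NormedAddCommGroup E] [NormedSpace ℂ E] [CompleteSpace E]

theorem setIntegral_ball_radial_smul {g : ℂ → E} {φ : ℝ → ℝ} {c : ℂ} {R : ℝ}
    (hg : DifferentiableOn ℂ g (ball c R))
    (hφg : IntegrableOn (fun ζ ↦ φ ‖ζ - c‖ • g ζ) (ball c R)) :
    ∫ ζ in ball c R, φ ‖ζ - c‖ • g ζ = (2 * π * ∫ r in Ioo 0 R, r * φ r) • g c := by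
  rw [setIntegral_ball_eq_integral_circleAverage hφg, mul_smul (2 * π), ← integral_smul_const]
  congr 1
  refine setIntegral_congr_fun measurableSet_Ioo fun r ⟨hr, hrR⟩ ↦ ?_
  have mean_value : Real.circleAverage g c r = g c := by
    refine (hg.mono ?_).diffContOnCl.circleAverage
    rw [abs_of_pos hr, closure_ball c hr.ne']
    exact closedBall_subset_ball hrR
  have weight_const : EqOn (fun ζ ↦ φ ‖ζ - c‖ • g ζ) (fun ζ ↦ φ r • g ζ) (sphere c |r|) := by
    intro ζ hζ
    simp only [mem_sphere_iff_norm.1 hζ, abs_of_pos hr]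
  rw [Real.circleAverage_congr_sphere weight_const, Real.circleAverage_fun_smul, mean_value,
    smul_smul]

theorem integral_Ioo_mul_one_sub_sq_pow (n : ℕ) :
    ∫ r in Ioo (0 : ℝ) 1, r * (1 - r ^ 2) ^ n = 1 / (2 * (n + 1) : ℝ) := by
  have primitive (r : ℝ) :
      HasDerivAt (fun r : ℝ ↦ -(1 - r ^ 2) ^ (n + 1) / (2 * (n + 1))) (r * (1 - r ^ 2) ^ n) r := by
    convert! ((((hasDerivAt_id r).pow 2).const_sub 1).pow (n + 1)).neg.div_const (2 * (n + 1 : ℝ))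
      using 1
    simp only [Nat.cast_add, Nat.cast_one, Pi.pow_apply, id_eq, add_tsub_cancel_right,
      Nat.cast_ofNat, Nat.add_one_sub_one, pow_one, mul_one, mul_neg, neg_neg]
    field_simp
  rw [← integral_Ioc_eq_integral_Ioo, ← intervalIntegral.integral_of_le zero_le_one,
    intervalIntegral.integral_eq_sub_of_hasDerivAt (fun r _ ↦ primitive r)
      (Continuous.intervalIntegrable (by fun_prop) _ _)]
  simp [neg_div]

theorem setIntegral_ball_one_sub_sq_pow_smul {g : ℂ → E} (n : ℕ)
    (hg : DifferentiableOn ℂ g (ball 0 1))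
    (hi : IntegrableOn (fun ζ ↦ (1 - ‖ζ‖ ^ 2) ^ n • g ζ) (ball 0 1)) :
    ∫ ζ in ball 0 1, (1 - ‖ζ‖ ^ 2) ^ n • g ζ = (π / (n + 1)) • g 0 := by
  have mean_value := setIntegral_ball_radial_smul (φ := fun r ↦ (1 - r ^ 2) ^ n) hg
    (by simpa only [sub_zero] using hi)
  simp only [sub_zero, integral_Ioo_mul_one_sub_sq_pow] at mean_value
  rw [mean_value]
  congr 1
  field_simp

end WeightedMeanValue

theorem integrable_smul_of_integrable_mul_norm_sq {α E : Type*} [MeasurableSpace α]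
    {μ : Measure α} [NormedAddCommGroup E] [NormedSpace ℝ E] {W : α → ℝ} {g : α → E}
    (hW : Integrable W μ) (hW_nonneg : 0 ≤ᵐ[μ] W) (hg : AEStronglyMeasurable g μ)
    (hWg : Integrable (fun x ↦ W x * ‖g x‖ ^ 2) μ) :
    Integrable (fun x ↦ W x • g x) μ := by
  refine (hW.add hWg).mono' (hW.aestronglyMeasurable.smul hg) ?_
  filter_upwards [hW_nonneg] with x (hx : 0 ≤ W x)
  have norm_le : ‖g x‖ ≤ 1 + ‖g x‖ ^ 2 := by nlinarith [sq_nonneg (‖g x‖ - 1), norm_nonneg (g x)]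
  calc ‖W x • g x‖ = W x * ‖g x‖ := by rw [norm_smul, Real.norm_of_nonneg hx]
    _ ≤ W x * (1 + ‖g x‖ ^ 2) := by gcongr
    _ = W x + W x * ‖g x‖ ^ 2 := by ring

section ComplexChangeOfVariables

variable {E : Type*} [NormedAddCommGroup E] [NormedSpace ℝ E] {s : Set ℂ} {φ φ' : ℂ → ℂ}

theorem det_restrictScalars_toSpanSingleton (c : ℂ) :
    ((ContinuousLinearMap.toSpanSingleton ℂ c).restrictScalars ℝ).det = ‖c‖ ^ 2 := by
  simp [ContinuousLinearMap.det, LinearMap.det_restrictScalars, Complex.sq_norm,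
    Algebra.norm_complex_apply]

theorem integrableOn_image_iff_integrableOn_norm_deriv_sq_smul (hs : MeasurableSet s)
    (hφ' : ∀ ζ ∈ s, HasDerivWithinAt φ (φ' ζ) s ζ) (hφ : InjOn φ s) (F : ℂ → E) :
    IntegrableOn F (φ '' s) ↔ IntegrableOn (fun ζ ↦ ‖φ' ζ‖ ^ 2 • F (φ ζ)) s := by
  simpa only [det_restrictScalars_toSpanSingleton, abs_sq, abs_pow, abs_norm] using
    integrableOn_image_iff_integrableOn_abs_det_fderiv_smul volume hs
      (fun ζ hζ ↦ (hφ' ζ hζ).hasFDerivWithinAt.restrictScalars ℝ) hφ F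

theorem integral_image_eq_integral_norm_deriv_sq_smul (hs : MeasurableSet s)
    (hφ' : ∀ ζ ∈ s, HasDerivWithinAt φ (φ' ζ) s ζ) (hφ : InjOn φ s) (F : ℂ → E) :
    ∫ w in φ '' s, F w = ∫ ζ in s, ‖φ' ζ‖ ^ 2 • F (φ ζ) := by
  simpa only [det_restrictScalars_toSpanSingleton, abs_pow, abs_norm] using
    integral_image_eq_integral_abs_det_fderiv_smul volume hs
      (fun ζ hζ ↦ (hφ' ζ hζ).hasFDerivWithinAt.restrictScalars ℝ) hφ F

end ComplexChangeOfVariables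

/-- The Cayley transform centred at `z`: for `0 < z.im` it maps the unit disc biholomorphically onto
the upper half-plane and `0` to `z`. -/
noncomputable def cayley (z ζ : ℂ) : ℂ := (z - conj z * ζ) / (1 - ζ)

section Cayley

variable {z ζ : ℂ}

theorem one_sub_ne_zero_of_mem_ball (hζ : ζ ∈ ball (0 : ℂ) 1) : 1 - ζ ≠ 0 := by
  intro h
  simp [← sub_eq_zero.1 h] at hζ

theorem one_sub_norm_sq_pos (hζ : ζ ∈ ball (0 : ℂ) 1) : 0 < 1 - ‖ζ‖ ^ 2 := by
  rw [mem_ball_zero_iff] at hζ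
  nlinarith [norm_nonneg ζ]

theorem sub_conj_ne_zero (hz : z.im ≠ 0) : z - conj z ≠ 0 := by
  simp [sub_conj, hz]

@[simp]
theorem cayley_zero (z : ℂ) : cayley z 0 = z := by simp [cayley]

theorem cayley_im (z : ℂ) (hζ : 1 - ζ ≠ 0) :
    (cayley z ζ).im = z.im * (1 - ‖ζ‖ ^ 2) / ‖1 - ζ‖ ^ 2 := by
  have normSq_ne : normSq (1 - ζ) ≠ 0 := by simpa using hζ
  rw [Complex.sq_norm, Complex.sq_norm, cayley, div_im, eq_div_iff normSq_ne]
  field_simp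
  simp only [normSq_apply, sub_re, sub_im, mul_re, mul_im, conj_re, conj_im, one_re, one_im]
  ring

theorem sub_conj_cayley (z : ℂ) (hζ : 1 - ζ ≠ 0) :
    z - conj (cayley z ζ) = (z - conj z) / conj (1 - ζ) := by
  have conj_ne : conj (1 - ζ) ≠ 0 := (map_ne_zero _).2 hζ
  rw [cayley, map_div₀, eq_div_iff conj_ne, sub_mul, div_mul_cancel₀ _ conj_ne]
  simp only [map_sub, map_one, map_mul, conj_conj]
  ring

theorem hasDerivAt_cayley (z : ℂ) (hζ : 1 - ζ ≠ 0) :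
    HasDerivAt (cayley z) ((z - conj z) / (1 - ζ) ^ 2) ζ := by
  convert! (((hasDerivAt_id ζ).const_mul (conj z)).const_sub z).div
    ((hasDerivAt_id ζ).const_sub 1) hζ using 1
  congr 1
  simp only [mul_one, id_eq, neg_mul, mul_neg, neg_sub]
  ring

theorem norm_deriv_cayley (hz : 0 < z.im) (ζ : ℂ) :
    ‖(z - conj z) / (1 - ζ) ^ 2‖ = 2 * z.im / ‖1 - ζ‖ ^ 2 := by
  simp [sub_conj, abs_of_pos hz]

theorem injOn_cayley (hz : z.im ≠ 0) : InjOn (cayley z) (ball 0 1) := by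
  intro a ha b hb hab
  rw [cayley, cayley, div_eq_div_iff (one_sub_ne_zero_of_mem_ball ha)
    (one_sub_ne_zero_of_mem_ball hb)] at hab
  have factored : (z - conj z) * (a - b) = 0 := by linear_combination hab
  exact sub_eq_zero.1 ((mul_eq_zero.1 factored).resolve_left (sub_conj_ne_zero hz))

theorem mapsTo_cayley (hz : 0 < z.im) : MapsTo (cayley z) (ball 0 1) upperHalfPlaneSet := by
  intro ζ hζ
  have norm_pos := norm_pos_iff.2 (one_sub_ne_zero_of_mem_ball hζ)
  have weight_pos := one_sub_norm_sq_pos hζ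
  change 0 < (cayley z ζ).im
  rw [cayley_im z (one_sub_ne_zero_of_mem_ball hζ)]
  positivity

theorem surjOn_cayley (hz : 0 < z.im) : SurjOn (cayley z) (ball 0 1) upperHalfPlaneSet := by
  intro w (hw : 0 < w.im)
  have denom_ne : w - conj z ≠ 0 := fun h ↦ by
    have im_eq := congrArg im h
    simp only [sub_im, conj_im, zero_im] at im_eq
    linarith
  have dist_lt : ‖w - z‖ ^ 2 < ‖w - conj z‖ ^ 2 := by
    simp only [Complex.sq_norm, normSq_apply, sub_re, sub_im, conj_re, conj_im]
    nlinarith [mul_pos hw hz]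
  refine ⟨(w - z) / (w - conj z), ?_, ?_⟩
  · rw [mem_ball_zero_iff, norm_div, div_lt_one (norm_pos_iff.2 denom_ne)]
    exact lt_of_pow_lt_pow_left₀ 2 (norm_nonneg _) dist_lt
  · have one_sub : 1 - (w - z) / (w - conj z) = (z - conj z) / (w - conj z) := by
      field_simp
      ring
    have := sub_conj_ne_zero hz.ne'
    rw [cayley, one_sub]
    field_simp
    ring

theorem image_cayley (hz : 0 < z.im) : cayley z '' ball 0 1 = upperHalfPlaneSet :=
  (surjOn_cayley hz).image_eq_of_mapsTo (mapsTo_cayley hz)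

variable {E : Type*} [NormedAddCommGroup E] [NormedSpace ℝ E]

theorem integrableOn_upperHalfPlaneSet_iff_cayley (hz : 0 < z.im) (F : ℂ → E) :
    IntegrableOn F upperHalfPlaneSet ↔
      IntegrableOn (fun ζ ↦ (2 * z.im / ‖1 - ζ‖ ^ 2) ^ 2 • F (cayley z ζ)) (ball 0 1) := by
  rw [← image_cayley hz, integrableOn_image_iff_integrableOn_norm_deriv_sq_smul measurableSet_ball
    (fun ζ hζ ↦ (hasDerivAt_cayley z (one_sub_ne_zero_of_mem_ball hζ)).hasDerivWithinAt)
    (injOn_cayley hz.ne')]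
  simp only [norm_deriv_cayley hz]

theorem setIntegral_upperHalfPlaneSet_eq_cayley (hz : 0 < z.im) (F : ℂ → E) :
    ∫ w in upperHalfPlaneSet, F w =
      ∫ ζ in ball 0 1, (2 * z.im / ‖1 - ζ‖ ^ 2) ^ 2 • F (cayley z ζ) := by
  rw [← image_cayley hz, integral_image_eq_integral_norm_deriv_sq_smul measurableSet_ball
    (fun ζ hζ ↦ (hasDerivAt_cayley z (one_sub_ne_zero_of_mem_ball hζ)).hasDerivWithinAt)
    (injOn_cayley hz.ne')]
  simp only [norm_deriv_cayley hz]

end Cayley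

/-- The reproducing kernel of the Bergman space of holomorphic functions on the upper half-plane
that are square-integrable for the weight `(Im w) ^ n`; the `p`-th power of the canonical bundle
corresponds to `n = 2 * p - 2`. -/
noncomputable def bergmanKernel (n : ℕ) (z w : ℂ) : ℂ :=
  -(2 * I) ^ n * (n + 1) / π * ((z - conj w) ^ (n + 2))⁻¹

theorem bergmanKernel_two_mul (q : ℕ) (z w : ℂ) :
    bergmanKernel (2 * q) z w =
      (-1) ^ (q + 1) * 2 ^ (2 * q) * (2 * (q + 1) - 1) / π * ((z - conj w) ^ (2 * (q + 1)))⁻¹ := by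
  rw [bergmanKernel, mul_pow, pow_mul I, I_sq, mul_add_one 2 q]
  push_cast
  ring

/-- The pullback of `f` to the unit disc along `cayley z` by the weight `n + 2` action, normalised
by omitting the constant factor so that its value at `0` is `f z`. -/
noncomputable def cayleyPullback {E : Type*} [NormedAddCommGroup E] [NormedSpace ℂ E] (n : ℕ)
    (z : ℂ) (f : ℂ → E) (ζ : ℂ) : E :=
  ((1 - ζ) ^ (n + 2))⁻¹ • f (cayley z ζ)

section Reproducing

variable {E : Type*} [NormedAddCommGroup E] [NormedSpace ℂ E] {f : ℂ → E} {z ζ : ℂ} {n : ℕ}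

@[simp]
theorem cayleyPullback_zero (n : ℕ) (z : ℂ) (f : ℂ → E) : cayleyPullback n z f 0 = f z := by
  simp [cayleyPullback]

theorem differentiableOn_cayleyPullback (hz : 0 < z.im)
    (hf : DifferentiableOn ℂ f upperHalfPlaneSet) :
    DifferentiableOn ℂ (cayleyPullback n z f) (ball 0 1) := by
  have cayley_diff : DifferentiableOn ℂ (cayley z) (ball 0 1) := fun ζ hζ ↦
    (hasDerivAt_cayley z (one_sub_ne_zero_of_mem_ball hζ)).differentiableAt.differentiableWithinAt
  refine DifferentiableOn.smul ?_ (hf.comp cayley_diff (mapsTo_cayley hz))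
  exact DifferentiableOn.inv (by fun_prop) fun ζ hζ ↦
    pow_ne_zero _ (one_sub_ne_zero_of_mem_ball hζ)

theorem jacobian_smul_bergmanKernel_smul (hz : 0 < z.im) (hζ : 1 - ζ ≠ 0) :
    (2 * z.im / ‖1 - ζ‖ ^ 2) ^ 2 •
        ((cayley z ζ).im ^ n • bergmanKernel n z (cayley z ζ) • f (cayley z ζ)) =
      ((n + 1) / π) • (1 - ‖ζ‖ ^ 2) ^ n • cayleyPullback n z f ζ := by
  have conj_ne : conj (1 - ζ) ≠ 0 := (map_ne_zero _).2 hζ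
  have im_ne : (z.im : ℂ) ≠ 0 := ofReal_ne_zero.2 hz.ne'
  have norm_sq : (‖1 - ζ‖ : ℂ) ^ 2 = (1 - ζ) * conj (1 - ζ) := (mul_conj' _).symm
  simp only [cayleyPullback, bergmanKernel, sub_conj_cayley z hζ, cayley_im z hζ, sub_conj,
    ← Complex.coe_smul, smul_smul]
  congr 1
  push_cast
  rw [norm_sq]
  generalize conj (1 - ζ) = b at *
  generalize 1 - ζ = a at *
  have I_ne := I_ne_zero
  simp only [div_pow, mul_pow, pow_add]
  field_simp
  rw [I_sq]
  ring

theorem jacobian_smul_norm_sq_mul_im_pow (hζ : 1 - ζ ≠ 0) :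
    (2 * z.im / ‖1 - ζ‖ ^ 2) ^ 2 • (‖f (cayley z ζ)‖ ^ 2 * (cayley z ζ).im ^ n) =
      (4 * z.im ^ (n + 2)) • ((1 - ‖ζ‖ ^ 2) ^ n * ‖cayleyPullback n z f ζ‖ ^ 2) := by
  have norm_ne := norm_ne_zero_iff.2 hζ
  simp only [cayleyPullback, cayley_im z hζ, norm_smul, norm_inv, norm_pow, mul_pow, div_pow,
    smul_eq_mul]
  field_simp
  ring

theorem integrableOn_bergmanKernel_iff (hz : 0 < z.im) :
    IntegrableOn (fun w ↦ w.im ^ n • bergmanKernel n z w • f w) upperHalfPlaneSet ↔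
      IntegrableOn (fun ζ ↦ (1 - ‖ζ‖ ^ 2) ^ n • cayleyPullback n z f ζ) (ball 0 1) := by
  have const_ne : ((n : ℝ) + 1) / π ≠ 0 := by positivity
  rw [integrableOn_upperHalfPlaneSet_iff_cayley hz,
    integrableOn_congr_fun (fun ζ hζ ↦ jacobian_smul_bergmanKernel_smul hz
      (one_sub_ne_zero_of_mem_ball hζ)) measurableSet_ball]
  exact integrable_fun_smul_iff const_ne _

theorem integrableOn_norm_sq_mul_im_pow_iff (hz : 0 < z.im) :
    IntegrableOn (fun w ↦ ‖f w‖ ^ 2 * w.im ^ n) upperHalfPlaneSet ↔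
      IntegrableOn (fun ζ ↦ (1 - ‖ζ‖ ^ 2) ^ n * ‖cayleyPullback n z f ζ‖ ^ 2) (ball 0 1) := by
  have const_ne : 4 * z.im ^ (n + 2) ≠ 0 := by positivity
  rw [integrableOn_upperHalfPlaneSet_iff_cayley hz,
    integrableOn_congr_fun (fun ζ hζ ↦ jacobian_smul_norm_sq_mul_im_pow
      (one_sub_ne_zero_of_mem_ball hζ)) measurableSet_ball]
  exact integrable_fun_smul_iff const_ne _

theorem integrableOn_bergmanKernel_of_norm_sq (hz : 0 < z.im)
    (hf : DifferentiableOn ℂ f upperHalfPlaneSet)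
    (hint : IntegrableOn (fun w ↦ ‖f w‖ ^ 2 * w.im ^ n) upperHalfPlaneSet) :
    IntegrableOn (fun w ↦ w.im ^ n • bergmanKernel n z w • f w) upperHalfPlaneSet := by
  have weight_integrable : IntegrableOn (fun ζ : ℂ ↦ (1 - ‖ζ‖ ^ 2) ^ n) (ball 0 1) :=
    ((by fun_prop : Continuous _).continuousOn.integrableOn_compact
      (isCompact_closedBall 0 1)).mono_set ball_subset_closedBall
  have weight_nonneg : ∀ᵐ ζ : ℂ ∂volume.restrict (ball 0 1), 0 ≤ (1 - ‖ζ‖ ^ 2) ^ n :=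
    ae_restrict_of_forall_mem measurableSet_ball fun ζ hζ ↦
      pow_nonneg (one_sub_norm_sq_pos hζ).le n
  exact (integrableOn_bergmanKernel_iff hz).2 <|
    integrable_smul_of_integrable_mul_norm_sq weight_integrable weight_nonneg
      ((differentiableOn_cayleyPullback hz hf).continuousOn.aestronglyMeasurable measurableSet_ball)
      ((integrableOn_norm_sq_mul_im_pow_iff hz).1 hint)

theorem stmt_10_general [CompleteSpace E] (hz : 0 < z.im)
    (hf : DifferentiableOn ℂ f upperHalfPlaneSet)
    (hint : IntegrableOn (fun w ↦ w.im ^ n • bergmanKernel n z w • f w) upperHalfPlaneSet) :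
    f z = ∫ w in upperHalfPlaneSet, w.im ^ n • bergmanKernel n z w • f w := by
  symm
  calc ∫ w in upperHalfPlaneSet, w.im ^ n • bergmanKernel n z w • f w
      = ∫ ζ in ball 0 1, ((n + 1) / π) • (1 - ‖ζ‖ ^ 2) ^ n • cayleyPullback n z f ζ := by
        rw [setIntegral_upperHalfPlaneSet_eq_cayley hz]
        exact setIntegral_congr_fun measurableSet_ball fun ζ hζ ↦
          jacobian_smul_bergmanKernel_smul hz (one_sub_ne_zero_of_mem_ball hζ)
    _ = ((n + 1) / π) • (π / (n + 1)) • cayleyPullback n z f 0 := by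
        rw [integral_smul, setIntegral_ball_one_sub_sq_pow_smul n
          (differentiableOn_cayleyPullback hz hf) ((integrableOn_bergmanKernel_iff hz).1 hint)]
    _ = f z := by
        have const_mul : ((n + 1) / π) * (π / (n + 1)) = 1 := by field_simp
        rw [smul_smul, const_mul, one_smul, cayleyPullback_zero]

end Reproducing

/-- Reproducing formula for the weighted Bergman space of weight `2p` on the upper
half-plane: a holomorphic weighted-`L²` function `f` satisfies
`f(z) = c_p ∫_ℍ f(w) (z - conj w)^{-2p} (Im w)^{2p-2} dA(w)` with
`c_p = (-1)^p 2^{2p-2} (2p-1) / π`. -/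
theorem stmt_10 (p : ℕ) (hp : 1 ≤ p) (f : ℂ → ℂ)
    (hf : DifferentiableOn ℂ f {z : ℂ | 0 < z.im})
    (hint : IntegrableOn (fun w : ℂ => ‖f w‖ ^ 2 * w.im ^ (2 * p - 2)) {z : ℂ | 0 < z.im}) :
    ∀ z ∈ {z : ℂ | 0 < z.im},
      f z = ((-1 : ℂ) ^ p * 2 ^ (2 * p - 2) * (2 * (p : ℂ) - 1) / (π : ℂ)) *
        ∫ w in {z : ℂ | 0 < z.im},
          f w * ((z - (starRingEnd ℂ) w) ^ (2 * p))⁻¹ * ((w.im : ℂ)) ^ (2 * p - 2) := by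
  intro z hz
  obtain ⟨q, rfl⟩ := Nat.exists_eq_add_of_le' hp
  have exponent : 2 * (q + 1) - 2 = 2 * q := by omega
  rw [exponent] at hint ⊢
  rw [stmt_10_general hz hf (integrableOn_bergmanKernel_of_norm_sq hz hf hint),
    ← integral_const_mul]
  congr! 2
  simp only [bergmanKernel_two_mul, Complex.real_smul, smul_eq_mul]
  push_cast
  ring
end
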